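/- Suppose the context events B_1, …, B_n are pairwise disjoint with union Ω, and suppose w_* and each w_i (i ∈ W) have embeddings with respect to C (Cᵀ.mulVec w⃗_i = PMI_i). Let ĉ := ∑_j p(B_j∣A_W) · c_j ∈ ℝ^d, where c_j is the j-th column of C, let Δ := ∑_j p(B_j∣A_W) · log( p(B_j∣A_W) / p(B_j∣A_*) ) be the KL divergence of the induced distributions, and let σ̂ := ∑_j p(B_j∣A_W) · σ^W_j. Then ⟨w⃗_*, ĉ⟩ = ⟨∑_{i∈W} w⃗_i, ĉ⟩ − Δ + σ̂ − τ^W. (Paper's Theorem 4: Weak paraphrasing — the weaker KL relationship confines the embedding w⃗_* only to a hyperplane.) -/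

import Mathlib

/-!
In each context `B_j`, Bayes' symmetry `p(A ∣ B) / p(A) = p(B ∣ A) / p(B)` lets one read PMI either
way. Read as `p(B_j ∣ ·) / p(B_j)`, passing from `A_W` to `A_*` costs exactly the paraphrase error
`ρ_j`; read as `p(· ∣ B_j) / p(·)`, the PMI of `A_W` is the sum of the PMIs of the words of `W` up
to the dependence errors `σ_j` and `τ`. So `PMI_* = ∑_{i ∈ W} PMI_i + ρ + σ − τ` pointwise. Pairing
an embedding with `ĉ = C p` is averaging its PMI vector `Cᵀ w⃗` against the weights
`p_j = p(B_j ∣ A_W)`; these sum to `1`, and the average of `ρ` is `−Δ`.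
-/

open MeasureTheory Real Finset Matrix

namespace AnalogiesExplained

variable {Ω : Type*}

/-- Conditional probability `p(B ∣ A) = μ(A ∩ B) / μ(A)` (as a real number). -/
noncomputable def condP [MeasurableSpace Ω] (μ : Measure Ω) (A B : Set Ω) : ℝ :=
  (μ (A ∩ B)).toReal / (μ A).toReal

/-- Pointwise mutual information `PMI(A, B) = log (μ(A ∩ B) / (μ(A)·μ(B)))`. -/
noncomputable def PMI [MeasurableSpace Ω] (μ : Measure Ω) (A B : Set Ω) : ℝ :=
  Real.log ((μ (A ∩ B)).toReal / ((μ A).toReal * (μ B).toReal))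

/-- The joint event of a finite word set: `A_W = ⋂ i ∈ W, A i`. -/
def jointEvent {ι : Type*} (A : ι → Set Ω) (W : Finset ι) : Set Ω :=
  ⋂ i ∈ W, A i

/-- Paraphrase error `ρ^{W,W*}_j = log (p(B_j ∣ A_{W*}) / p(B_j ∣ A_W))`. -/
noncomputable def rho [MeasurableSpace Ω] (μ : Measure Ω) (AW AWstar B : Set Ω) : ℝ :=
  Real.log (condP μ AWstar B / condP μ AW B)

/-- Conditional-dependence error `σ^W_j = log (p(A_W ∣ B_j) / ∏_{i ∈ W} p(A_i ∣ B_j))`. -/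
noncomputable def sigma [MeasurableSpace Ω] {ι : Type*} (μ : Measure Ω) (A : ι → Set Ω)
    (W : Finset ι) (B : Set Ω) : ℝ :=
  Real.log (condP μ B (jointEvent A W) / ∏ i ∈ W, condP μ B (A i))

/-- Marginal-dependence error `τ^W = log (μ(A_W) / ∏_{i ∈ W} μ(A_i))`. -/
noncomputable def tau [MeasurableSpace Ω] {ι : Type*} (μ : Measure Ω) (A : ι → Set Ω)
    (W : Finset ι) : ℝ :=
  Real.log ((μ (jointEvent A W)).toReal / ∏ i ∈ W, (μ (A i)).toReal)

lemma dotProduct_sum_smul_col {m n R : Type*} [Fintype m] [Fintype n] [CommSemiring R]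
    (C : Matrix m n R) (v : m → R) (p : n → R) :
    v ⬝ᵥ (∑ j, p j • (fun r => C r j)) = ∑ j, p j * (Cᵀ *ᵥ v) j := by
  rw [dotProduct_sum]
  refine Finset.sum_congr rfl fun j _ => ?_
  rw [dotProduct_smul, smul_eq_mul, dotProduct_comm]
  rfl

lemma jointEvent_subset {ι : Type*} (A : ι → Set Ω) {W : Finset ι} {i : ι} (hi : i ∈ W) :
    jointEvent A W ⊆ A i :=
  Set.biInter_subset_of_mem hi

section Measure

variable [MeasurableSpace Ω]

lemma PMI_comm (μ : Measure Ω) (A B : Set Ω) : PMI μ A B = PMI μ B A := by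
  rw [PMI, PMI, Set.inter_comm, mul_comm]

lemma neg_rho (μ : Measure Ω) (A A' B : Set Ω) :
    -rho μ A A' B = log (condP μ A B / condP μ A' B) := by
  rw [rho, ← log_inv, inv_div]

lemma measure_inter_ne_zero_of_jointEvent {μ : Measure Ω} {ι : Type*} {A : ι → Set Ω}
    {W : Finset ι} {B : Set Ω} (h : μ (B ∩ jointEvent A W) ≠ 0) {i : ι} (hi : i ∈ W) :
    μ (B ∩ A i) ≠ 0 := fun h0 =>
  h (measure_mono_null (Set.inter_subset_inter_right B (jointEvent_subset A hi)) h0)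

variable {μ : Measure Ω} [IsFiniteMeasure μ]

lemma toReal_measure_ne_zero_of_subset {A B : Set Ω} (h : A ⊆ B) (hA : μ A ≠ 0) :
    (μ B).toReal ≠ 0 :=
  ENNReal.toReal_ne_zero.2 ⟨fun hB => hA (measure_mono_null h hB), measure_ne_top μ B⟩

lemma condP_ne_zero {A B : Set Ω} (h : μ (A ∩ B) ≠ 0) : condP μ A B ≠ 0 :=
  div_ne_zero (toReal_measure_ne_zero_of_subset subset_rfl h)
    (toReal_measure_ne_zero_of_subset Set.inter_subset_left h)

lemma PMI_eq_log_condP_sub_log {A B : Set Ω} (h : μ (A ∩ B) ≠ 0) :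
    PMI μ A B = log (condP μ A B) - log (μ B).toReal := by
  rw [← log_div (condP_ne_zero h) (toReal_measure_ne_zero_of_subset Set.inter_subset_right h),
    PMI, condP, div_div]

lemma PMI_eq_PMI_add_rho {A A' B : Set Ω} (h : μ (A ∩ B) ≠ 0) (h' : μ (A' ∩ B) ≠ 0) :
    PMI μ A' B = PMI μ A B + rho μ A A' B := by
  rw [PMI_eq_log_condP_sub_log h, PMI_eq_log_condP_sub_log h', rho,
    log_div (condP_ne_zero h') (condP_ne_zero h)]
  ring

lemma sum_condP_eq_one {κ : Type*} [Fintype κ] {A : Set Ω} {B : κ → Set Ω}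
    (hB : ∀ j, MeasurableSet (B j)) (hdisj : Pairwise (Function.onFun Disjoint B))
    (hcover : ⋃ j, B j = Set.univ) (hA : μ A ≠ 0) : ∑ j, condP μ A (B j) = 1 := by
  have total_probability : μ A = ∑ j, μ (A ∩ B j) := by
    conv_lhs => rw [← Measure.restrict_univ (μ := μ), ← hcover, Measure.restrict_iUnion hdisj hB]
    simp only [Measure.sum_fintype, Measure.finsetSum_apply, Measure.restrict_apply' (hB _)]
  simp only [condP]
  rw [← Finset.sum_div, ← ENNReal.toReal_sum fun j _ => measure_ne_top μ _, ← total_probability]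
  exact div_self (toReal_measure_ne_zero_of_subset subset_rfl hA)

section Words

variable {ι : Type*} {A : ι → Set Ω} {W : Finset ι}

lemma tau_eq_log_sub_sum_log (h : μ (jointEvent A W) ≠ 0) :
    tau μ A W = log (μ (jointEvent A W)).toReal - ∑ i ∈ W, log (μ (A i)).toReal := by
  have hA : ∀ i ∈ W, (μ (A i)).toReal ≠ 0 := fun i hi =>
    toReal_measure_ne_zero_of_subset (jointEvent_subset A hi) h
  rw [tau, log_div (toReal_measure_ne_zero_of_subset subset_rfl h) (prod_ne_zero_iff.2 hA),
    log_prod hA]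

lemma sigma_eq_log_sub_sum_log {B : Set Ω} (h : μ (B ∩ jointEvent A W) ≠ 0) :
    sigma μ A W B = log (condP μ B (jointEvent A W)) - ∑ i ∈ W, log (condP μ B (A i)) := by
  have hA : ∀ i ∈ W, condP μ B (A i) ≠ 0 := fun i hi =>
    condP_ne_zero (measure_inter_ne_zero_of_jointEvent h hi)
  rw [sigma, log_div (condP_ne_zero h) (prod_ne_zero_iff.2 hA), log_prod hA]

lemma PMI_jointEvent {B : Set Ω} (h : μ (jointEvent A W ∩ B) ≠ 0) :
    PMI μ (jointEvent A W) B = ∑ i ∈ W, PMI μ (A i) B + sigma μ A W B - tau μ A W := by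
  have h' : μ (B ∩ jointEvent A W) ≠ 0 := by rwa [Set.inter_comm]
  have word_PMI : ∀ i ∈ W, PMI μ (A i) B = log (condP μ B (A i)) - log (μ (A i)).toReal :=
    fun i hi => by
      rw [PMI_comm, PMI_eq_log_condP_sub_log (measure_inter_ne_zero_of_jointEvent h' hi)]
  rw [PMI_comm, PMI_eq_log_condP_sub_log h', Finset.sum_congr rfl word_PMI,
    Finset.sum_sub_distrib, sigma_eq_log_sub_sum_log h',
    tau_eq_log_sub_sum_log fun h0 => h (measure_inter_null_of_null_left B h0)]
  ring

end Words

end Measure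

/-- At a context that never co-occurs with `W` the weight `p(B_j ∣ A_W)` is `0`, and the summands of
`Δ` and `σ̂` vanish by the convention `0 · log 0 = 0`. -/
theorem weak_paraphrase_embedding_general
    [MeasurableSpace Ω] {μ : Measure Ω} [IsFiniteMeasure μ]
    {ι κ δ : Type*} [Fintype κ] [Fintype δ] {A : ι → Set Ω} {Astar : Set Ω} {B : κ → Set Ω}
    {W : Finset ι} (hmB : ∀ j, MeasurableSet (B j))
    (hdisj : Pairwise (Function.onFun Disjoint B)) (hcover : ⋃ j, B j = Set.univ)
    (hAW : μ (jointEvent A W) ≠ 0)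
    (hAsB : ∀ j, μ (jointEvent A W ∩ B j) ≠ 0 → μ (Astar ∩ B j) ≠ 0)
    {C : Matrix δ κ ℝ} {wstar : δ → ℝ} {wv : ι → δ → ℝ}
    (hws : ∀ j, μ (jointEvent A W ∩ B j) ≠ 0 → (Cᵀ *ᵥ wstar) j = PMI μ Astar (B j))
    (hwi : ∀ i ∈ W, ∀ j, μ (jointEvent A W ∩ B j) ≠ 0 →
      (Cᵀ *ᵥ wv i) j = PMI μ (A i) (B j)) :
    wstar ⬝ᵥ (∑ j, condP μ (jointEvent A W) (B j) • (fun r => C r j))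
      = (∑ i ∈ W, wv i) ⬝ᵥ (∑ j, condP μ (jointEvent A W) (B j) • (fun r => C r j))
        - (∑ j, condP μ (jointEvent A W) (B j) *
            log (condP μ (jointEvent A W) (B j) / condP μ Astar (B j)))
        + (∑ j, condP μ (jointEvent A W) (B j) * sigma μ A W (B j))
        - tau μ A W := by
  set p : κ → ℝ := fun j => condP μ (jointEvent A W) (B j) with hp
  have pointwise : ∀ j, p j * (Cᵀ *ᵥ wstar) j = p j * (Cᵀ *ᵥ ∑ i ∈ W, wv i) j
      - p j * log (p j / condP μ Astar (B j)) + p j * sigma μ A W (B j) - p j * tau μ A W := by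
    intro j
    by_cases hj : μ (jointEvent A W ∩ B j) = 0
    · have hpj : p j = 0 := by simp only [hp, condP, hj, ENNReal.toReal_zero, zero_div]
      simp only [hpj, zero_mul, sub_zero, add_zero]
    · have sum_PMI : (Cᵀ *ᵥ ∑ i ∈ W, wv i) j = ∑ i ∈ W, PMI μ (A i) (B j) := by
        rw [mulVec_sum, Finset.sum_apply]
        exact Finset.sum_congr rfl fun i hi => hwi i hi j hj
      rw [hws j hj, sum_PMI, PMI_eq_PMI_add_rho hj (hAsB j hj), PMI_jointEvent hj, ← neg_rho]
      ring
  have sum_p : ∑ j, p j = 1 := sum_condP_eq_one hmB hdisj hcover hAW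
  rw [dotProduct_sum_smul_col, dotProduct_sum_smul_col, Finset.sum_congr rfl fun j _ => pointwise j,
    Finset.sum_sub_distrib, Finset.sum_add_distrib, Finset.sum_sub_distrib, ← Finset.sum_mul,
    sum_p, one_mul]

/-- **Theorem 4 (Weak paraphrasing).** With `ĉ = ∑_j p(B_j∣A_W)·c_j` (`c_j` the `j`-th column of
`C`), `Δ` the KL divergence of the induced distributions and `σ̂ = ∑_j p(B_j∣A_W)·σ^W_j`:
`⟨w⃗_*, ĉ⟩ = ⟨∑_{i∈W} w⃗_i, ĉ⟩ − Δ + σ̂ − τ^W`. -/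
theorem weak_paraphrase_embedding
    [MeasurableSpace Ω] (μ : Measure Ω) [IsProbabilityMeasure μ]
    {ι : Type*} (A : ι → Set Ω) (Astar : Set Ω) {n : ℕ} (B : Fin n → Set Ω)
    (W : Finset ι)
    (hmA : ∀ i, MeasurableSet (A i)) (hmB : ∀ j, MeasurableSet (B j))
    (hmAs : MeasurableSet Astar)
    (hdisj : ∀ j k, j ≠ k → Disjoint (B j) (B k))
    (hcover : (⋃ j, B j) = Set.univ)
    (hA : ∀ i ∈ W, 0 < (μ (A i)).toReal)
    (hB : ∀ j, 0 < (μ (B j)).toReal)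
    (hAs : 0 < (μ Astar).toReal)
    (hAW : 0 < (μ (jointEvent A W)).toReal)
    (hAB : ∀ i ∈ W, ∀ j, 0 < (μ (A i ∩ B j)).toReal)
    (hAsB : ∀ j, 0 < (μ (Astar ∩ B j)).toReal)
    (hAWB : ∀ j, 0 < (μ (jointEvent A W ∩ B j)).toReal)
    {d : ℕ} (C : Matrix (Fin d) (Fin n) ℝ)
    (wstar : Fin d → ℝ) (wv : ι → Fin d → ℝ)
    (hws : C.transpose.mulVec wstar = fun j => PMI μ Astar (B j))
    (hwi : ∀ i ∈ W, C.transpose.mulVec (wv i) = fun j => PMI μ (A i) (B j)) :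
    wstar ⬝ᵥ (∑ j, condP μ (jointEvent A W) (B j) • (fun r => C r j))
      = (∑ i ∈ W, wv i) ⬝ᵥ (∑ j, condP μ (jointEvent A W) (B j) • (fun r => C r j))
        - (∑ j, condP μ (jointEvent A W) (B j) *
            Real.log (condP μ (jointEvent A W) (B j) / condP μ Astar (B j)))
        + (∑ j, condP μ (jointEvent A W) (B j) * sigma μ A W (B j))
        - tau μ A W :=
  weak_paraphrase_embedding_general hmB hdisj hcover (ENNReal.toReal_pos_iff.1 hAW).1.ne'
    (fun j _ => (ENNReal.toReal_pos_iff.1 (hAsB j)).1.ne') (fun j _ => congrFun hws j)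
    fun i hi j _ => congrFun (hwi i hi) j

end AnalogiesExplained
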